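/- Let 𝒲 be the van der Waerden ideal, consisting of all sets A ⊆ ℕ for which there is k ∈ ℕ such that A contains no arithmetic progression of length k. There exists a lower semicontinuous submeasure φ on ℕ with Fin(φ) = 𝒲 and P_Fin(φ) ≤ 2; consequently there exists a nonpathological lower semicontinuous submeasure ψ with Fin(ψ) = 𝒲, i.e., 𝒲 is a nonpathological F_σ ideal. -/

import Mathlib

open Filter
open scoped ENNReal

/-- A submeasure on a set (type) `X`. -/
def IsSubmeasure {X : Type*} (φ : Set X → ℝ≥0∞) : Prop :=
  φ ∅ = 0 ∧ (∀ A B : Set X, A ⊆ B → φ A ≤ φ B) ∧ ∀ A B : Set X, φ (A ∪ B) ≤ φ A + φ B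

/-- A (finitely additive) measure on `X`. -/
def IsFAMeasure {X : Type*} (μ : Set X → ℝ≥0∞) : Prop :=
  μ ∅ = 0 ∧ ∀ A B : Set X, Disjoint A B → μ (A ∪ B) = μ A + μ B

/-- A σ-measure on `X`: a measure that is countably additive on pairwise disjoint sequences. -/
def IsSigmaMeasure {X : Type*} (μ : Set X → ℝ≥0∞) : Prop :=
  IsFAMeasure μ ∧ ∀ A : ℕ → Set X, (Pairwise fun m n => Disjoint (A m) (A n)) →
    μ (⋃ n, A n) = ∑' n, μ (A n)

/-- `hat φ A = sup { μ A : μ a measure with μ ≤ φ pointwise }`. -/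
noncomputable def hat {X : Type*} (φ : Set X → ℝ≥0∞) (A : Set X) : ℝ≥0∞ :=
  ⨆ (μ : Set X → ℝ≥0∞) (_ : IsFAMeasure μ ∧ ∀ B, μ B ≤ φ B), μ A

/-- `hatSigma φ A = sup { μ A : μ a σ-measure with μ ≤ φ pointwise }`. -/
noncomputable def hatSigma {X : Type*} (φ : Set X → ℝ≥0∞) (A : Set X) : ℝ≥0∞ :=
  ⨆ (μ : Set X → ℝ≥0∞) (_ : IsSigmaMeasure μ ∧ ∀ B, μ B ≤ φ B), μ A

/-- Lower semicontinuity of a submeasure. -/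
def IsLSC {X : Type*} (φ : Set X → ℝ≥0∞) : Prop :=
  ∀ A : Set X, φ A = ⨆ (F : Set X) (_ : F ⊆ A ∧ F.Finite), φ F

/-- The ratio used in the degree of pathology, with the conventions
`∞/∞ = 0/0 = 1`, `a/0 = ∞` and `∞/a = ∞` for positive real `a`. -/
noncomputable def pratio (a b : ℝ≥0∞) : ℝ≥0∞ :=
  if (a = 0 ∧ b = 0) ∨ (a = ⊤ ∧ b = ⊤) then 1 else a / b

/-- The degree of pathology. -/
noncomputable def degP {X : Type*} (φ : Set X → ℝ≥0∞) : ℝ≥0∞ :=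
  ⨆ A : Set X, pratio (φ A) (hat φ A)

/-- The σ-degree of pathology. -/
noncomputable def degPSigma {X : Type*} (φ : Set X → ℝ≥0∞) : ℝ≥0∞ :=
  ⨆ A : Set X, pratio (φ A) (hatSigma φ A)

/-- The Fin-degree of pathology. -/
noncomputable def degPFin {X : Type*} (φ : Set X → ℝ≥0∞) : ℝ≥0∞ :=
  ⨆ (A : Set X) (_ : A.Finite), pratio (φ A) (hat φ A)

/-- `A` contains an arithmetic progression of length `k`. -/
def ContainsAP (A : Set ℕ) (k : ℕ) : Prop :=
  ∃ a d : ℕ, 0 < d ∧ ∀ i < k, a + i * d ∈ A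

/-- The van der Waerden ideal: sets not containing arbitrarily long arithmetic progressions. -/
def vdW : Set (Set ℕ) :=
  {A | ∃ k, ¬ ContainsAP A k}

/-!
Let `p` map a word `x` over the alphabet `{0, …, k}` to `a + (∑ xᵢ) d`; it takes combinatorial lines
to arithmetic progressions of length `k + 1`. By the density Hales–Jewett theorem, for words of a
suitable length the preimage of a set without such progressions has density less than `1 / (k + 1)`.
So `k + 1` times the image under `p` of the uniform measure gives it mass at most `1`, while a set
that contains a long enough progression with first term `a` and difference `d` gets mass `k + 1`.
The supremum of these measures over all `k`, `a`, `d` is nonpathological, being a supremum of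
measures, and it is finite exactly on the van der Waerden ideal.

The density Hales–Jewett theorem is proved by induction on the alphabet, after Polymath and Dodos,
Kanellopoulos and Tyros. Let `δ` be the limiting maximal density of line-free sets over the
alphabet `β ∪ {none}`, suppose that `δ > 0`, and take a line-free set `A` with density close to `δ`
in every fibre. The theorem for `β` gives a subspace on which the set `I` of words all of whose
fillings (`none` replaced by a letter of `β`) lie in `A` has density bounded below. `A` nearly
misses `I`, since a word in `A ∩ I` that has a letter `none` yields a line in `A`. The complement of
`I` is a union of intersections of insensitive sets, so by the theorem for `β` it is nearly a
disjoint union of large subspaces, in each of which `A` has density at most about `δ`. Hence the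
density of `A` is bounded away from `δ`, a contradiction.
-/

open Combinatorics
open scoped BigOperators

namespace HalesJewett

universe u

section Average

variable {X Y : Type*}

/-- The average of a real function over a finite type. The `finsum` keeps decidability and `Fintype`
instances out of the statements; on an infinite type the value is `0`. -/
noncomputable def avg (f : X → ℝ) : ℝ := (∑ᶠ x, f x) / Nat.card X

/-- The density of a subset of a finite type. -/
noncomputable def density (A : Set X) : ℝ := avg (A.indicator 1)

theorem avg_eq_expect [Fintype X] (f : X → ℝ) : avg f = 𝔼 x, f x := by
  rw [avg, finsum_eq_sum_of_fintype, Fintype.expect_eq_sum_div_card, Nat.card_eq_fintype_card]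

theorem avg_comp_equiv (e : X ≃ Y) (f : Y → ℝ) : avg (fun x => f (e x)) = avg f := by
  rw [avg, avg, finsum_comp_equiv, Nat.card_congr e]

theorem density_preimage_equiv (e : X ≃ Y) (A : Set Y) : density (e ⁻¹' A) = density A :=
  avg_comp_equiv e (A.indicator 1)

theorem density_empty : density (∅ : Set X) = 0 := by
  simp [density, avg]

theorem nonempty_of_density_pos {A : Set X} (h : 0 < density A) : A.Nonempty := by
  rw [Set.nonempty_iff_ne_empty]
  rintro rfl
  exact h.ne' density_empty

theorem avg_indicator_range [Finite Y] {V : Y → X} (hV : V.Injective) (h : X → ℝ) :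
    avg ((Set.range V).indicator h) = Nat.card Y / Nat.card X * avg fun y => h (V y) := by
  cases isEmpty_or_nonempty Y
  · simp [avg, Set.range_eq_empty]
  · have hY : (Nat.card Y : ℝ) ≠ 0 := Nat.cast_ne_zero.2 Nat.card_pos.ne'
    have hsum : ∑ᶠ x, (Set.range V).indicator h x = ∑ᶠ y, h (V y) := by
      rw [← finsum_mem_def, finsum_mem_range hV]
    rw [avg, avg, hsum, mul_comm, div_mul_div_cancel₀ hY]

variable [Finite X] [Finite Y]

theorem avg_const [Nonempty X] (c : ℝ) : avg (fun _ : X => c) = c := by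
  cases nonempty_fintype X
  rw [avg_eq_expect, Fintype.expect_const]

theorem avg_mono {f g : X → ℝ} (h : ∀ x, f x ≤ g x) : avg f ≤ avg g := by
  cases nonempty_fintype X
  simp only [avg_eq_expect]
  exact Finset.expect_le_expect fun x _ => h x

theorem avg_add (f g : X → ℝ) : avg (fun x => f x + g x) = avg f + avg g := by
  cases nonempty_fintype X
  simp only [avg_eq_expect, Finset.expect_add_distrib]

theorem avg_sub (f g : X → ℝ) : avg (fun x => f x - g x) = avg f - avg g := by
  cases nonempty_fintype X
  simp only [avg_eq_expect, Finset.expect_sub_distrib]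

theorem avg_const_mul (c : ℝ) (f : X → ℝ) : avg (fun x => c * f x) = c * avg f := by
  cases nonempty_fintype X
  simp only [avg_eq_expect, Finset.mul_expect]

theorem avg_finsetSum {T : Type*} (s : Finset T) (f : T → X → ℝ) :
    avg (fun x => ∑ t ∈ s, f t x) = ∑ t ∈ s, avg (f t) := by
  cases nonempty_fintype X
  simp only [avg_eq_expect, Finset.expect_sum_comm]

theorem avg_comm (f : X → Y → ℝ) :
    avg (fun x => avg fun y => f x y) = avg fun y => avg fun x => f x y := by
  cases nonempty_fintype X
  cases nonempty_fintype Y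
  simp only [avg_eq_expect]
  exact Finset.expect_comm ..

theorem avg_prod (f : X × Y → ℝ) : avg f = avg fun x => avg fun y => f (x, y) := by
  cases nonempty_fintype X
  cases nonempty_fintype Y
  simp only [avg_eq_expect, ← Finset.univ_product_univ, Finset.expect_product]

theorem avg_nonneg {f : X → ℝ} (h : ∀ x, 0 ≤ f x) : 0 ≤ avg f := by
  cases nonempty_fintype X
  rw [avg_eq_expect]
  exact Finset.expect_nonneg fun x _ => h x

theorem avg_nonpos {f : X → ℝ} (h : ∀ x, f x ≤ 0) : avg f ≤ 0 :=
  (avg_mono h).trans_eq (by simp [avg])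

theorem le_avg [Nonempty X] {f : X → ℝ} {c : ℝ} (h : ∀ x, c ≤ f x) : c ≤ avg f :=
  (avg_const c).symm.trans_le (avg_mono h)

theorem exists_avg_le [Nonempty X] (f : X → ℝ) : ∃ x, avg f ≤ f x := by
  cases nonempty_fintype X
  rw [avg_eq_expect]
  simpa using Finset.exists_le_of_le_expect Finset.univ_nonempty le_rfl

theorem sub_card_mul_le {f : X → ℝ} {M : ℝ} (h : ∀ x, f x ≤ M) (x : X) :
    M - Nat.card X * (M - avg f) ≤ f x := by
  cases nonempty_fintype X
  have : Nonempty X := ⟨x⟩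
  have hsum : Nat.card X * (M - avg f) = ∑ x, (M - f x) := by
    rw [avg_eq_expect, Fintype.expect_eq_sum_div_card, Nat.card_eq_fintype_card,
      Finset.sum_sub_distrib, Finset.sum_const, Finset.card_univ, nsmul_eq_mul]
    field_simp
  have hx : M - f x ≤ ∑ x, (M - f x) :=
    Finset.single_le_sum (f := fun x => M - f x) (fun x _ => sub_nonneg.2 (h x)) (Finset.mem_univ x)
  linarith

theorem density_nonneg (A : Set X) : 0 ≤ density A :=
  avg_nonneg fun _ => Set.indicator_nonneg (fun _ _ => zero_le_one) _

theorem density_mono {A B : Set X} (h : A ⊆ B) : density A ≤ density B :=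
  avg_mono fun x => Set.indicator_le_indicator_of_subset h (fun _ => zero_le_one) x

theorem density_univ [Nonempty X] : density (Set.univ : Set X) = 1 := by
  rw [density, Set.indicator_univ]
  exact avg_const 1

theorem density_le_one [Nonempty X] (A : Set X) : density A ≤ 1 :=
  (density_mono A.subset_univ).trans_eq density_univ

theorem avg_indicator_union_of_disjoint {A B : Set X} (h : Disjoint A B) (f : X → ℝ) :
    avg ((A ∪ B).indicator f) = avg (A.indicator f) + avg (B.indicator f) := by
  rw [Set.indicator_union_of_disjoint h, avg_add]

theorem density_union_of_disjoint {A B : Set X} (h : Disjoint A B) :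
    density (A ∪ B) = density A + density B :=
  avg_indicator_union_of_disjoint h 1

theorem density_compl [Nonempty X] (A : Set X) : density Aᶜ = 1 - density A := by
  rw [eq_sub_iff_add_eq', ← density_union_of_disjoint disjoint_compl_right, Set.union_compl_self,
    density_univ]

theorem avg_indicator_le_density {f : X → ℝ} (hf : ∀ x, f x ≤ 1) (A : Set X) :
    avg (A.indicator f) ≤ density A :=
  avg_mono fun x => Set.indicator_le_indicator (hf x)

theorem density_pos {A : Set X} (h : A.Nonempty) : 0 < density A := by
  cases nonempty_fintype X
  obtain ⟨x, hx⟩ := h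
  rw [density, avg_eq_expect]
  exact Finset.expect_pos' (fun x _ => Set.indicator_nonneg (fun _ _ => zero_le_one) x)
    ⟨x, Finset.mem_univ x, by simp [hx]⟩

theorem density_iUnion_le {T : Type*} [Fintype T] (A : T → Set X) :
    density (⋃ t, A t) ≤ ∑ t, density (A t) := by
  simp only [density, ← avg_finsetSum]
  refine avg_mono fun x => ?_
  have hnonneg (t : T) : 0 ≤ (A t).indicator (1 : X → ℝ) x :=
    Set.indicator_nonneg (fun _ _ => zero_le_one) x
  by_cases hx : x ∈ ⋃ t, A t
  · obtain ⟨t, ht⟩ := Set.mem_iUnion.1 hx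
    rw [Set.indicator_of_mem hx, ← Set.indicator_of_mem ht (1 : X → ℝ)]
    exact Finset.single_le_sum (fun t _ => hnonneg t) (Finset.mem_univ t)
  · rw [Set.indicator_of_notMem hx]
    exact Finset.sum_nonneg fun t _ => hnonneg t

theorem avg_le_add_density [Nonempty X] {g : X → ℝ} (hg : ∀ x, g x ≤ 1) {c : ℝ} (hc : 0 ≤ c) :
    avg g ≤ c + density {x | c ≤ g x} := by
  rw [← avg_const (X := X) c, density, ← avg_add]
  refine avg_mono fun x => ?_
  by_cases hx : c ≤ g x
  · simpa [avg_const, hx] using (hg x).trans (le_add_of_nonneg_left hc)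
  · simpa [avg_const, hx] using (lt_of_not_ge hx).le

theorem exists_notMem_le [Nonempty X] {g : X → ℝ} (hg : ∀ x, g x ≤ 1) {B : Set X} {c : ℝ}
    (hc : 0 < c) (h : density B + c ≤ avg g) : ∃ x ∉ B, c ≤ g x := by
  obtain ⟨x, hx⟩ := exists_avg_le fun x => g x - B.indicator 1 x
  rw [avg_sub, ← density] at hx
  by_cases hxB : x ∈ B
  · rw [Set.indicator_of_mem hxB, Pi.one_apply] at hx
    linarith [hg x]
  · rw [Set.indicator_of_notMem hxB] at hx
    exact ⟨x, hxB, by linarith⟩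

theorem exists_le_density_of_cover {T : Type*} [Finite T] {S : Set X} {R : T → Set X} {c : ℝ}
    (hc : 0 < c) (hcS : c ≤ density S) (hSR : S ⊆ ⋃ t, R t) :
    ∃ t, c / (Nat.card T + 1) ≤ density (R t) := by
  cases nonempty_fintype T
  by_contra! hlt
  have hle : density S ≤ Nat.card T * (c / (Nat.card T + 1)) := by
    calc density S ≤ ∑ t, density (R t) := (density_mono hSR).trans (density_iUnion_le R)
      _ ≤ ∑ _t : T, c / (Nat.card T + 1) := Finset.sum_le_sum fun t _ => (hlt t).le
      _ = Nat.card T * (c / (Nat.card T + 1)) := by simp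
  have hmul : (Nat.card T + 1) * (c / (Nat.card T + 1)) = c := mul_div_cancel₀ _ (by positivity)
  have hpos : 0 < c / (Nat.card T + 1) := by positivity
  linarith

theorem density_pi {ι : Type*} [Fintype ι] (S : ι → Set X) :
    density {x : ι → X | ∀ i, x i ∈ S i} = ∏ i, density (S i) := by
  classical
  cases nonempty_fintype X
  have hind (x : ι → X) : {x : ι → X | ∀ i, x i ∈ S i}.indicator (1 : (ι → X) → ℝ) x =
      ∏ i, (S i).indicator 1 (x i) := by
    simp [Set.indicator_apply, Finset.prod_ite_zero]
  simp only [density, avg_eq_expect, Fintype.expect_eq_sum_div_card, hind, Finset.prod_div_distrib,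
    Finset.prod_univ_sum, Fintype.piFinset_univ, Finset.prod_const, Fintype.card_fun,
    Finset.card_univ, Nat.cast_pow]

theorem density_forall_mem {ι : Type*} [Finite ι] [Nonempty X] (J : Finset ι) (S : Set X) :
    density {x : ι → X | ∀ i ∈ J, x i ∈ S} = density S ^ J.card := by
  classical
  cases nonempty_fintype ι
  have hset : {x : ι → X | ∀ i ∈ J, x i ∈ S} =
      {x | ∀ i, x i ∈ if i ∈ J then S else Set.univ} := by
    ext x
    refine forall_congr' fun i => ?_
    by_cases hi : i ∈ J <;> simp [hi]
  rw [hset, density_pi]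
  simp [apply_ite density, density_univ]

end Average

section Subspace

variable {α : Type u} {η θ ι κ : Type}

instance [Finite η] [Finite α] [Finite ι] : Finite (Subspace η α ι) :=
  Finite.of_injective Subspace.idxFun fun _ _ => Subspace.ext

theorem subspace_injective (V : Subspace η α ι) : Function.Injective V := by
  intro x y h
  ext j
  obtain ⟨i, hi⟩ := V.proper j
  simpa [Subspace.apply_inr hi] using congrFun h i

/-- The subspace of `ι → α` obtained by inserting a subspace `W` of `η → α` into the
parametrization of `V`. -/
def comp (V : Subspace η α ι) (W : Subspace θ α η) : Subspace θ α ι where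
  idxFun i := (V.idxFun i).elim Sum.inl W.idxFun
  proper e := by
    obtain ⟨j, hj⟩ := W.proper e
    obtain ⟨i, hi⟩ := V.proper j
    exact ⟨i, by simp [hi, hj]⟩

@[simp]
theorem comp_apply (V : Subspace η α ι) (W : Subspace θ α η) (x : θ → α) :
    comp V W x = V (W x) := by
  ext i
  cases h : V.idxFun i <;> simp [comp, Subspace.apply_def, h]

/-- The word over `ι` with letters `x` and `z` on the two parts of a splitting `e` of `ι`. -/
def glue (e : ι ≃ η ⊕ κ) (x : η → α) (z : κ → α) : ι → α := Sum.elim x z ∘ e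

/-- The subspace of all words with prescribed letters `x` on the left part of a splitting. -/
def fixLeft (e : ι ≃ η ⊕ κ) (x : η → α) : Subspace κ α ι where
  idxFun i := Sum.map x id (e i)
  proper j := ⟨e.symm (Sum.inr j), by simp⟩

@[simp]
theorem fixLeft_apply (e : ι ≃ η ⊕ κ) (x : η → α) (z : κ → α) : fixLeft e x z = glue e x z := by
  ext i
  cases h : e i <;> simp [fixLeft, glue, Subspace.apply_def, h]

/-- The subspace of all words with prescribed letters `z` on the right part of a splitting. -/
def fixRight (e : ι ≃ η ⊕ κ) (z : κ → α) : Subspace η α ι :=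
  fixLeft (e.trans (Equiv.sumComm η κ)) z

@[simp]
theorem fixRight_apply (e : ι ≃ η ⊕ κ) (z : κ → α) (x : η → α) : fixRight e z x = glue e x z := by
  ext i
  cases h : e i <;> simp [fixRight, glue, h]

/-- The product of a subspace on the left part and a subspace on the right part of a splitting. -/
def join {η' κ' : Type} (e : ι ≃ η ⊕ κ) (V : Subspace η' α η) (W : Subspace κ' α κ) :
    Subspace (η' ⊕ κ') α ι where
  idxFun i := (e i).elim (Sum.map id Sum.inl ∘ V.idxFun) (Sum.map id Sum.inr ∘ W.idxFun)
  proper := by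
    rintro (j | j)
    · obtain ⟨i, hi⟩ := V.proper j
      exact ⟨e.symm (Sum.inl i), by simp [hi]⟩
    · obtain ⟨i, hi⟩ := W.proper j
      exact ⟨e.symm (Sum.inr i), by simp [hi]⟩

theorem join_apply {η' κ' : Type} (e : ι ≃ η ⊕ κ) (V : Subspace η' α η) (W : Subspace κ' α κ)
    (y : η' ⊕ κ' → α) :
    join e V W y = glue e (V (y ∘ Sum.inl)) (W (y ∘ Sum.inr)) := by
  ext i
  rcases h : e i with j | j
  · cases hj : V.idxFun j <;> simp [join, glue, Subspace.apply_def, h, hj]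
  · cases hj : W.idxFun j <;> simp [join, glue, Subspace.apply_def, h, hj]

/-- The set `A` of words contains a combinatorial subspace of dimension `η`. For `η = Unit` this
says that `A` contains a combinatorial line. -/
def HasSubspace (η : Type) (A : Set (ι → α)) : Prop := ∃ V : Subspace η α ι, ∀ y, V y ∈ A

theorem HasSubspace.of_preimage {A : Set (ι → α)} (V : Subspace κ α ι)
    (h : HasSubspace η (V ⁻¹' A)) : HasSubspace η A := by
  obtain ⟨W, hW⟩ := h
  exact ⟨comp V W, fun y => by simpa using hW y⟩

theorem HasSubspace.congr (e : η ≃ θ) {A : Set (ι → α)} (h : HasSubspace η A) :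
    HasSubspace θ A := by
  obtain ⟨V, hV⟩ := h
  refine ⟨V.reindex e (Equiv.refl α) (Equiv.refl ι), fun y => ?_⟩
  convert hV (y ∘ e)
  ext i
  simp

theorem not_hasSubspace_empty [Nonempty α] : ¬ HasSubspace η (∅ : Set (ι → α)) := by
  rintro ⟨_, hV⟩
  exact hV fun _ => Classical.arbitrary α

theorem exists_equiv_sum [Finite ι] {n N : ℕ} (h : n + N ≤ Nat.card ι) :
    ∃ m, N ≤ m ∧ Nonempty (ι ≃ Fin n ⊕ Fin m) :=
  ⟨Nat.card ι - n, by lia,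
    ⟨(Finite.equivFin ι).trans ((finCongr (by lia)).trans finSumFinEquiv.symm)⟩⟩

variable [Finite α]

theorem avg_glue [Finite η] [Finite κ] (e : ι ≃ η ⊕ κ) (f : (ι → α) → ℝ) :
    avg f = avg fun x => avg fun z => f (glue e x z) := by
  rw [← avg_prod (fun p : (η → α) × (κ → α) => f (glue e p.1 p.2))]
  exact (avg_comp_equiv ((Equiv.sumArrowEquivProdArrow η κ α).symm.trans
    (e.symm.arrowCongr (Equiv.refl α))) f).symm

theorem density_eq_avg_glue [Finite η] [Finite κ] (e : ι ≃ η ⊕ κ) (A : Set (ι → α)) :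
    density A = avg fun x => density {z | glue e x z ∈ A} :=
  avg_glue e (A.indicator 1)

theorem density_eq_avg_glue' [Finite η] [Finite κ] (e : ι ≃ η ⊕ κ) (A : Set (ι → α)) :
    density A = avg fun z => density {x | glue e x z ∈ A} :=
  (density_eq_avg_glue e A).trans (avg_comm _)

theorem exists_subspace_le_density {Z : Type*} [Nonempty α] [Finite η] [Finite κ] [Finite Z]
    [Nonempty Z] {S : Z → Set (κ → α)} {c : ℝ} (hc : 0 < c)
    (hS : 2 * c ≤ avg fun z => density (S z))
    (hsub : ∀ z, c ≤ density (S z) → HasSubspace η (S z)) :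
    ∃ V : Subspace η α κ,
      c / (Nat.card (Subspace η α κ) + 1) ≤ density {z | ∀ y, V y ∈ S z} := by
  have hdense : c ≤ density {z | c ≤ density (S z)} := by
    linarith [avg_le_add_density (fun z => density_le_one (S z)) hc.le]
  exact exists_le_density_of_cover hc hdense fun z hz => Set.mem_iUnion.2 (hsub z hz)

end Subspace

section Density

/-- The density Hales–Jewett property of a finite alphabet: every set of words of a suitable length
`n` that has density at least `ε` contains a combinatorial line. -/
def DensityHalesJewett (α : Type u) : Prop :=
  ∀ ε : ℝ, 0 < ε → ∃ n : ℕ, ∀ A : Set (Fin n → α), ε ≤ density A → HasSubspace Unit A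

theorem DensityHalesJewett.congr {α β : Type u} (e : α ≃ β) (h : DensityHalesJewett α) :
    DensityHalesJewett β := by
  intro ε hε
  obtain ⟨n, hn⟩ := h ε hε
  refine ⟨n, fun A hA => ?_⟩
  rw [← density_preimage_equiv ((Equiv.refl (Fin n)).arrowCongr e)] at hA
  obtain ⟨V, hV⟩ := hn _ hA
  refine ⟨V.reindex (Equiv.refl Unit) e (Equiv.refl (Fin n)), fun y => ?_⟩
  convert Set.mem_preimage.1 (hV (e.symm ∘ y))
  ext i
  simp

theorem DensityHalesJewett.exists_hasSubspace {α : Type u} [Finite α] [Nonempty α]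
    (h : DensityHalesJewett α) (m : ℕ) {ε : ℝ} (hε : 0 < ε) :
    ∃ N : ℕ, ∀ (ι : Type) [Finite ι], N ≤ Nat.card ι →
      ∀ A : Set (ι → α), ε ≤ density A → HasSubspace (Fin m) A := by
  induction m generalizing ε with
  | zero =>
    refine ⟨0, fun ι _ _ A hA => ?_⟩
    obtain ⟨x, hx⟩ := nonempty_of_density_pos (hε.trans_le hA)
    exact ⟨⟨fun i => Sum.inl (x i), fun e => e.elim0⟩, fun _ => hx⟩
  | succ m ih =>
    obtain ⟨n, hn⟩ := h (ε / 2) (by positivity)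
    obtain ⟨N, hN⟩ := ih (ε := ε / 2 / (Nat.card (Subspace Unit α (Fin n)) + 1)) (by positivity)
    refine ⟨n + N, fun ι _ hι A hA => ?_⟩
    obtain ⟨q, hq, ⟨e⟩⟩ := exists_equiv_sum hι
    rw [density_eq_avg_glue' e] at hA
    obtain ⟨L, hL⟩ := exists_subspace_le_density (S := fun z => {x | glue e x z ∈ A})
      (by positivity) (by linarith) fun z => hn _
    obtain ⟨V, hV⟩ := hN (Fin q) (by simpa using hq) _ hL
    have hLV : HasSubspace (Unit ⊕ Fin m) A := ⟨join e L V, fun y => by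
      rw [join_apply]
      exact hV _ _⟩
    exact hLV.congr ((Equiv.sumComm _ _).trans
      ((Equiv.sumCongr (Equiv.refl _) finOneEquiv.symm).trans finSumFinEquiv))

end Density

section Insensitive

variable {β : Type u} {η ι : Type}

/-- Replace the extra letter `none` by the letter `b`. -/
def fill (b : β) (o : Option β) : Option β := some (o.getD b)

/-- Membership in `D` does not change when letters `none` are replaced by `b`. -/
def Insensitive (b : β) (D : Set (ι → Option β)) : Prop := ∀ x, fill b ∘ x ∈ D ↔ x ∈ D

variable {b : β} {D E : Set (ι → Option β)}

theorem Insensitive.compl (h : Insensitive b D) : Insensitive b Dᶜ := fun x => not_congr (h x)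

theorem Insensitive.sdiff (hD : Insensitive b D) (hE : Insensitive b E) :
    Insensitive b (D \ E) :=
  fun x => and_congr (hD x) (not_congr (hE x))

theorem insensitive_setOf_forall {T : Sort*} {D : T → Set (ι → Option β)}
    (h : ∀ t, Insensitive b (D t)) : Insensitive b {x | ∀ t, x ∈ D t} :=
  fun x => forall_congr' fun t => h t x

theorem insensitive_setOf_fill (A : Set (ι → Option β)) : Insensitive b {x | fill b ∘ x ∈ A} :=
  fun _ => Iff.rfl

theorem fill_comp_subspace (b : β) (V : Subspace η (Option β) ι) (x : η → Option β) :
    fill b ∘ V (fill b ∘ x) = fill b ∘ V x := by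
  ext1 i
  cases h : V.idxFun i <;> simp [Subspace.apply_def, h, fill]

theorem Insensitive.preimage (h : Insensitive b D) (V : Subspace η (Option β) ι) :
    Insensitive b (V ⁻¹' D) := by
  intro x
  rw [Set.mem_preimage, ← h, fill_comp_subspace, h, Set.mem_preimage]

/-- Replace the letters of `x` other than `none` by the letters of `w`. -/
def overwrite (x : ι → Option β) (w : {i // (x i).isSome} → β) : ι → Option β :=
  fun i => if h : (x i).isSome then some (w ⟨i, h⟩) else none

theorem overwrite_eq_map (x : ι → Option β) (y : ι → β) :
    overwrite x (fun i => y i) = fun i => (x i).map fun _ => y i := by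
  ext1 i
  cases h : x i <;> simp [overwrite, h]

/-- Exchange the letters of `x` other than `none` with the letters of `y` in the same places. -/
def exchange : (ι → Option β) × (ι → β) ≃ (ι → Option β) × (ι → β) :=
  Function.Involutive.toPerm
    (fun p => (fun i => (p.1 i).map fun _ => p.2 i, fun i => (p.1 i).getD (p.2 i))) <| by
    rintro ⟨x, y⟩
    ext1 <;> ext1 i <;> cases h : x i <;> simp [h]

theorem avg_comp_restrict {X : Type*} [Finite X] [Nonempty X] [Finite ι] (p : ι → Prop)
    (g : ({i // p i} → X) → ℝ) : avg (fun y : ι → X => g fun i => y i) = avg g := by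
  classical
  rw [← avg_comp_equiv (Equiv.piEquivPiSubtypeProd p fun _ => X).symm, avg_prod]
  simp only [Equiv.piEquivPiSubtypeProd, Equiv.coe_fn_symm_mk, Subtype.prop, dite_true,
    Subtype.coe_eta, avg_const]

theorem avg_overwrite [Finite β] [Nonempty β] [Finite ι] (f : (ι → Option β) → ℝ) :
    avg f = avg fun x => avg fun w => f (overwrite x w) :=
  calc avg f = avg fun p : (ι → Option β) × (ι → β) => f p.1 := by
        simp only [avg_prod, avg_const]
    _ = avg fun p : (ι → Option β) × (ι → β) => f fun i => (p.1 i).map fun _ => p.2 i :=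
        (avg_comp_equiv exchange fun p : (ι → Option β) × (ι → β) => f p.1).symm
    _ = avg fun x : ι → Option β => avg fun y : ι → β => f (overwrite x fun i => y i) := by
        simp only [avg_prod, overwrite_eq_map]
    _ = avg fun x => avg fun w => f (overwrite x w) := by
        simp only [avg_comp_restrict _ fun w => f (overwrite _ w)]

/-- A subspace over the alphabet `β` on the coordinates where `x` is not `none`, extended by `none`
in the other coordinates. -/
def liftSome (x : ι → Option β) (V : Subspace η β {i // (x i).isSome}) :
    Subspace η (Option β) ι where
  idxFun i := if h : (x i).isSome then Sum.map some id (V.idxFun ⟨i, h⟩) else Sum.inl none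
  proper e := by
    obtain ⟨i, hi⟩ := V.proper e
    exact ⟨i, by simp [i.2, hi]⟩

theorem liftSome_some_comp (x : ι → Option β) (V : Subspace η β {i // (x i).isSome}) (y : η → β) :
    liftSome x V (some ∘ y) = overwrite x (V y) := by
  ext1 i
  by_cases h : (x i).isSome
  · cases hi : V.idxFun ⟨i, h⟩ <;> simp [liftSome, overwrite, Subspace.apply_def, h, hi]
  · simp [liftSome, overwrite, Subspace.apply_def, h]

theorem Insensitive.hasSubspace_of_overwrite (hD : Insensitive b D) {x : ι → Option β}
    (h : HasSubspace η {w | overwrite x w ∈ D}) : HasSubspace η D := by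
  obtain ⟨V, hV⟩ := h
  refine ⟨liftSome x V, fun y => ?_⟩
  rw [← Set.mem_preimage, ← hD.preimage, Set.mem_preimage]
  have hfill : fill b ∘ y = some ∘ fun i => (y i).getD b := rfl
  rw [hfill, liftSome_some_comp]
  exact hV _

theorem density_none_lt_one [Finite β] [Nonempty β] : density ({none} : Set (Option β)) < 1 := by
  have h := density_pos (X := Option β) (A := {none}ᶜ) ⟨some (Classical.arbitrary β), by simp⟩
  rw [density_compl] at h
  linarith

theorem density_compl_none_lt_one [Finite β] : density ({none}ᶜ : Set (Option β)) < 1 := by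
  rw [density_compl]
  linarith [density_pos (Set.singleton_nonempty (none : Option β))]

theorem le_card_isSome {N t : ℕ} {x : Fin (N * t) → Option β}
    (h : ∀ k, ∃ j, (x (finProdFinEquiv (k, j))).isSome) : N ≤ Nat.card {i // (x i).isSome} := by
  choose j hj using h
  simpa using Nat.card_le_card_of_injective
    (fun k => (⟨finProdFinEquiv (k, j k), hj k⟩ : {i // (x i).isSome})) fun k k' hkk' => by simp_all

theorem exists_density_card_isSome_lt_le (β : Type u) [Finite β] [Nonempty β] (N : ℕ) {ε : ℝ}
    (hε : 0 < ε) :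
    ∃ M : ℕ, density {x : Fin M → Option β | Nat.card {i // (x i).isSome} < N} ≤ ε := by
  obtain ⟨t, ht⟩ := exists_pow_lt_of_lt_one (show 0 < ε / (N + 1) by positivity)
    (density_none_lt_one (β := β))
  refine ⟨N * t, ?_⟩
  let block (k : Fin N) : Finset (Fin (N * t)) :=
    Finset.univ.map ((Function.Embedding.sectR k (Fin t)).trans finProdFinEquiv.toEmbedding)
  have hcover : {x : Fin (N * t) → Option β | Nat.card {i // (x i).isSome} < N} ⊆
      ⋃ k, {x | ∀ i ∈ block k, x i ∈ ({none} : Set (Option β))} := by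
    intro x hx
    by_contra hmem
    refine (Set.mem_ofPred.1 hx).not_ge (le_card_isSome fun k => ?_)
    simpa [block, Option.isSome_iff_ne_none, -finProdFinEquiv_apply_val] using
      fun h => hmem (Set.mem_iUnion.2 ⟨k, h⟩)
  have hblock (k : Fin N) : (block k).card = t := by simp [block]
  calc _ ≤ _ := (density_mono hcover).trans (density_iUnion_le _)
    _ = N * density ({none} : Set (Option β)) ^ t := by
      simp only [density_forall_mem, hblock, Finset.sum_const, Finset.card_univ, Fintype.card_fin,
        nsmul_eq_mul]
    _ ≤ N * (ε / (N + 1)) := by gcongr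
    _ ≤ ε := by
      rw [mul_div_assoc', div_le_iff₀ (by positivity)]
      linarith

theorem DensityHalesJewett.exists_insensitive_hasSubspace [Finite β] [Nonempty β]
    (h : DensityHalesJewett β) (m : ℕ) {θ : ℝ} (hθ : 0 < θ) :
    ∃ M : ℕ, ∀ (b : β) (D : Set (Fin M → Option β)), Insensitive b D → θ ≤ density D →
      HasSubspace (Fin m) D := by
  obtain ⟨N, hN⟩ := h.exists_hasSubspace m (half_pos hθ)
  obtain ⟨M, hM⟩ := exists_density_card_isSome_lt_le β N (half_pos hθ)
  refine ⟨M, fun b D hD hDθ => ?_⟩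
  rw [density, avg_overwrite] at hDθ
  obtain ⟨x, hxN, hxD⟩ := exists_notMem_le
    (fun x => density_le_one {w | overwrite x w ∈ D}) (half_pos hθ)
    ((add_le_add hM le_rfl).trans ((add_halves θ).trans_le hDθ))
  exact hD.hasSubspace_of_overwrite (hN _ (not_lt.1 hxN) _ hxD)

end Insensitive

section Tiling

variable {α : Type u} {η ι κ κ' : Type}

/-- The part of `ι → α` with left part in the subspace `V` and right part in `Z`: a union of copies
of `V` indexed by `Z`. -/
def box (e : ι ≃ κ ⊕ κ') (V : Subspace η α κ) (Z : Set (κ' → α)) : Set (ι → α) :=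
  {w | w ∘ e.symm ∘ Sum.inl ∈ Set.range V ∧ w ∘ e.symm ∘ Sum.inr ∈ Z}

@[simp]
theorem glue_mem_box {e : ι ≃ κ ⊕ κ'} {V : Subspace η α κ} {Z : Set (κ' → α)} {x : κ → α}
    {z : κ' → α} : glue e x z ∈ box e V Z ↔ x ∈ Set.range V ∧ z ∈ Z := by
  have hleft : glue e x z ∘ e.symm ∘ Sum.inl = x := by ext; simp [glue]
  have hright : glue e x z ∘ e.symm ∘ Sum.inr = z := by ext; simp [glue]
  rw [box, Set.mem_ofPred_eq, hleft, hright]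

theorem exists_glue_eq (e : ι ≃ κ ⊕ κ') (w : ι → α) : ∃ x z, glue e x z = w :=
  ⟨w ∘ e.symm ∘ Sum.inl, w ∘ e.symm ∘ Sum.inr, by
    ext i
    obtain ⟨j | j, rfl⟩ := e.symm.surjective i <;> simp [glue]⟩

theorem box_subset {e : ι ≃ κ ⊕ κ'} {V : Subspace η α κ} {Z : Set (κ' → α)} {D : Set (ι → α)}
    (h : ∀ z ∈ Z, ∀ y, glue e (V y) z ∈ D) : box e V Z ⊆ D := by
  intro w hw
  obtain ⟨x, z, rfl⟩ := exists_glue_eq e w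
  obtain ⟨⟨y, rfl⟩, hz⟩ := glue_mem_box.1 hw
  exact h z hz y

theorem Insensitive.fixLeft_preimage_box {β : Type u} {b : β} {e : ι ≃ κ ⊕ κ'}
    {V : Subspace η (Option β) κ} {Z : Set (κ' → Option β)} (hZ : Insensitive b Z)
    (x : κ → Option β) : Insensitive b (fixLeft e x ⁻¹' box e V Z) := by
  intro z
  simp only [Set.mem_preimage, fixLeft_apply, glue_mem_box, hZ z]

/-- A function on words bounded by `1` whose average over every `m`-dimensional subspace is at most
`0`. These are the functions against which a tiling by subspaces is tested. -/
structure NonposOnSubspaces (m : ℕ) (f : (ι → α) → ℝ) : Prop where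
  le_one : ∀ x, f x ≤ 1
  avg_nonpos : ∀ V : Subspace (Fin m) α ι, avg (fun y => f (V y)) ≤ 0

/-- Up to an error of density `θ`, the set `D` is a disjoint union of `m`-dimensional subspaces.
This is expressed dually: the average over `D` of a function that averages to at most `0` on
`m`-dimensional subspaces is at most `θ`. -/
def Tiled (m : ℕ) (θ : ℝ) (D : Set (ι → α)) : Prop :=
  ∀ f : (ι → α) → ℝ, NonposOnSubspaces m f → avg (D.indicator f) ≤ θ

variable {m n : ℕ} {f : (ι → α) → ℝ} {θ θ' : ℝ} {D E S : Set (ι → α)}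

theorem NonposOnSubspaces.comp (hf : NonposOnSubspaces m f) (V : Subspace κ α ι) :
    NonposOnSubspaces m fun x => f (V x) :=
  ⟨fun x => hf.le_one (V x), fun W => by simpa using hf.avg_nonpos (HalesJewett.comp V W)⟩

theorem tiled_empty (hθ : 0 ≤ θ) : Tiled m θ (∅ : Set (ι → α)) := by
  intro f _
  simpa [avg] using hθ

variable [Finite α] [Finite κ] [Finite κ']

theorem avg_indicator_box [Finite η] (e : ι ≃ κ ⊕ κ') (V : Subspace η α κ) (Z : Set (κ' → α))
    (f : (ι → α) → ℝ) :
    avg ((box e V Z).indicator f) = Nat.card (η → α) / Nat.card (κ → α) *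
      avg (Z.indicator fun z => avg fun y => f (glue e (V y) z)) := by
  have hfiber (x : κ → α) : (avg fun z => (box e V Z).indicator f (glue e x z)) =
      (Set.range V).indicator (fun x => avg (Z.indicator fun z => f (glue e x z))) x := by
    by_cases hx : x ∈ Set.range V
    · rw [Set.indicator_of_mem hx]
      congr 1
      ext z
      by_cases hz : z ∈ Z <;> simp [hx, hz, -Set.mem_range]
    · simp [hx, -Set.mem_range, avg]
  have hswap (z : κ' → α) : (avg fun y => Z.indicator (fun z => f (glue e (V y) z)) z) =
      Z.indicator (fun z => avg fun y => f (glue e (V y) z)) z := by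
    by_cases hz : z ∈ Z <;> simp [hz, avg]
  rw [avg_glue e]
  simp only [hfiber]
  rw [avg_indicator_range (subspace_injective V), avg_comm]
  simp only [hswap]

theorem density_box [Finite η] [Nonempty α] (e : ι ≃ κ ⊕ κ') (V : Subspace η α κ)
    (Z : Set (κ' → α)) :
    density (box e V Z) = Nat.card (η → α) / Nat.card (κ → α) * density Z := by
  simp only [density, avg_indicator_box, Pi.one_apply, avg_const]
  rfl

theorem NonposOnSubspaces.avg_indicator_box_nonpos (hf : NonposOnSubspaces m f)
    (e : ι ≃ κ ⊕ κ') (V : Subspace (Fin m) α κ) (Z : Set (κ' → α)) :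
    avg ((box e V Z).indicator f) ≤ 0 := by
  rw [avg_indicator_box]
  refine mul_nonpos_of_nonneg_of_nonpos (by positivity) (HalesJewett.avg_nonpos fun z => ?_)
  exact Set.indicator_nonpos (fun z _ => by simpa using (hf.comp (fixRight e z)).avg_nonpos V) z

variable [Finite ι]

theorem Tiled.union_of_disjoint (hD : Tiled m θ D) (hE : Tiled m θ' E) (hDE : Disjoint D E) :
    Tiled m (θ + θ') (D ∪ E) := by
  intro f hf
  rw [avg_indicator_union_of_disjoint hDE]
  exact add_le_add (hD f hf) (hE f hf)

theorem Tiled.inter [Nonempty α] (hD : Tiled n θ D) (hθ' : 0 ≤ θ')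
    (hS : ∀ V : Subspace (Fin n) α ι, Tiled m θ' (V ⁻¹' S)) : Tiled m (θ + θ') (D ∩ S) := by
  intro f hf
  have hg : NonposOnSubspaces n fun x => S.indicator f x - θ' := by
    refine ⟨fun x => ?_, fun V => ?_⟩
    · have hle : S.indicator f x ≤ 1 :=
        Set.indicator_apply_le' (fun _ => hf.le_one x) fun _ => zero_le_one
      linarith
    · have hle : avg (fun y => S.indicator f (V y)) ≤ θ' := hS V _ (hf.comp V)
      rw [avg_sub, avg_const]
      linarith
  have hsplit : (D ∩ S).indicator f =
      fun x => D.indicator (fun x => S.indicator f x - θ') x + θ' * D.indicator 1 x := by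
    ext x
    by_cases hx : x ∈ D <;> simp [← Set.indicator_indicator, hx]
  rw [hsplit, avg_add, avg_const_mul]
  exact add_le_add (hD _ hg) (mul_le_of_le_one_right hθ' (density_le_one D))

end Tiling

section TilingInsensitive

variable {β : Type u} [Finite β] [Nonempty β]

-- Most fibres of `D` over the right part contain a subspace; a popular one, `V`, spans a box inside
-- `D`, on which `f` averages to at most `0`. The sets `E x` are the fibres of what remains.
theorem DensityHalesJewett.exists_density_decrement (h : DensityHalesJewett β) (m : ℕ) {θ : ℝ}
    (hθ : 0 < θ) :
    ∃ (M : ℕ) (r : ℝ), 0 < r ∧ r ≤ 1 ∧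
      ∀ {ι κ : Type} [Finite ι] [Finite κ] (e : ι ≃ Fin M ⊕ κ) {b : β} {D : Set (ι → Option β)},
        Insensitive b D → θ ≤ density D → ∀ f, NonposOnSubspaces m f →
        ∃ E : (Fin M → Option β) → Set (κ → Option β), (∀ x, Insensitive b (E x)) ∧
          avg (fun x => density (E x)) + r ≤ density D ∧
          avg (D.indicator f) ≤ avg fun x => avg ((E x).indicator fun z => f (glue e x z)) := by
  obtain ⟨M, hM⟩ := h.exists_insensitive_hasSubspace m (half_pos hθ)
  set c := θ / 2 / (Nat.card (Subspace (Fin m) (Option β) (Fin M)) + 1)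
  set ρ : ℝ := Nat.card (Fin m → Option β) / Nat.card (Fin M → Option β)
  have hρ : 0 < ρ := div_pos (Nat.cast_pos.2 Nat.card_pos) (Nat.cast_pos.2 Nat.card_pos)
  refine ⟨M, min (ρ * c) 1, by positivity, min_le_right _ _, fun {ι κ} _ _ e b D hD hDθ f hf => ?_⟩
  rw [density_eq_avg_glue' e] at hDθ
  obtain ⟨V, hV⟩ := exists_subspace_le_density (S := fun z => {x | glue e x z ∈ D}) (half_pos hθ)
    (by linarith) fun z => hM b _ (by simpa [Set.preimage] using hD.preimage (fixRight e z))
  set Z : Set (κ → Option β) := {z | ∀ y, glue e (V y) z ∈ D}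
  have hZ : Insensitive b Z :=
    insensitive_setOf_forall (D := fun y => {z | glue e (V y) z ∈ D}) fun y => by
      simpa [Set.preimage] using hD.preimage (fixLeft e (V y))
  have hunion : D \ box e V Z ∪ box e V Z = D :=
    Set.sdiff_union_of_subset (box_subset fun z hz => hz)
  have hsplit (g : (ι → Option β) → ℝ) : avg (D.indicator g) =
      avg ((D \ box e V Z).indicator g) + avg ((box e V Z).indicator g) := by
    rw [← avg_indicator_union_of_disjoint Set.disjoint_sdiff_left, hunion]
  refine ⟨fun x => fixLeft e x ⁻¹' (D \ box e V Z),
    fun x => (hD.preimage _).sdiff (hZ.fixLeft_preimage_box x), ?_, ?_⟩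
  · have hdens := hsplit 1
    rw [← density, ← density, ← density, density_box, density_eq_avg_glue e (D \ _)] at hdens
    have hle : ρ * c ≤ ρ * density Z := mul_le_mul_of_nonneg_left hV hρ.le
    have hmin := min_le_left (ρ * c) 1
    simp only [Set.preimage, fixLeft_apply]
    linarith
  · rw [hsplit f]
    refine (add_le_of_nonpos_right (hf.avg_indicator_box_nonpos e V Z)).trans_eq ?_
    rw [avg_glue e]
    simp only [Set.preimage, fixLeft_apply]
    rfl

theorem DensityHalesJewett.exists_avg_indicator_le (h : DensityHalesJewett β) (m : ℕ) {θ : ℝ}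
    (hθ : 0 < θ) :
    ∃ (M : ℕ) (r : ℝ), 0 < r ∧ r ≤ 1 ∧ ∀ (j : ℕ) {ι : Type} [Finite ι], j * M ≤ Nat.card ι →
      ∀ {b : β} {D : Set (ι → Option β)}, Insensitive b D → ∀ f, NonposOnSubspaces m f →
        avg (D.indicator f) ≤ θ + (1 - r) ^ j * density D := by
  obtain ⟨M, r, hr0, hr1, hdec⟩ := h.exists_density_decrement m hθ
  refine ⟨M, r, hr0, hr1, fun j => ?_⟩
  induction j with
  | zero =>
    intro ι _ _ b D _ f hf
    linarith [avg_indicator_le_density hf.le_one D]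
  | succ j ih =>
    intro ι _ hι b D hD f hf
    have hpow : 0 ≤ (1 - r) ^ j := pow_nonneg (sub_nonneg.2 hr1) j
    rcases lt_or_ge (density D) θ with hDθ | hDθ
    · have hnonneg : 0 ≤ (1 - r) ^ (j + 1) * density D :=
        mul_nonneg (pow_nonneg (sub_nonneg.2 hr1) _) (density_nonneg D)
      linarith [avg_indicator_le_density hf.le_one D]
    · obtain ⟨q, hq, ⟨e⟩⟩ := exists_equiv_sum (ι := ι) (n := M) (N := j * M) (by lia)
      obtain ⟨E, hE, hdens, hle⟩ := hdec e hD hDθ f hf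
      have hfiber (x : Fin M → Option β) : (avg ((E x).indicator fun z => f (glue e x z))) ≤
          θ + (1 - r) ^ j * density (E x) := by
        simpa using ih (by simpa using hq) (hE x) _ (hf.comp (fixLeft e x))
      calc avg (D.indicator f) ≤ _ := hle
        _ ≤ avg fun x => θ + (1 - r) ^ j * density (E x) := avg_mono hfiber
        _ = θ + (1 - r) ^ j * avg fun x => density (E x) := by
          rw [avg_add, avg_const, avg_const_mul]
        _ ≤ θ + (1 - r) ^ j * ((1 - r) * density D) := by
          refine add_le_add_right (mul_le_mul_of_nonneg_left ?_ hpow) θ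
          linarith [mul_le_of_le_one_right hr0.le (density_le_one D)]
        _ = θ + (1 - r) ^ (j + 1) * density D := by ring

theorem DensityHalesJewett.exists_tiled (h : DensityHalesJewett β) (m : ℕ) {θ : ℝ} (hθ : 0 < θ) :
    ∃ N : ℕ, ∀ {ι : Type} [Finite ι], N ≤ Nat.card ι →
      ∀ {b : β} {D : Set (ι → Option β)}, Insensitive b D → Tiled m θ D := by
  obtain ⟨M, r, hr0, hr1, hle⟩ := h.exists_avg_indicator_le m (half_pos hθ)
  obtain ⟨j, hj⟩ := exists_pow_lt_of_lt_one (half_pos hθ) (show 1 - r < 1 by linarith)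
  refine ⟨j * M, fun {ι} _ hι b D hD f hf => ?_⟩
  have hpow : (1 - r) ^ j * density D ≤ (1 - r) ^ j :=
    mul_le_of_le_one_right (pow_nonneg (sub_nonneg.2 hr1) j) (density_le_one D)
  linarith [hle j hι hD f hf]

theorem DensityHalesJewett.exists_tiled_inter (h : DensityHalesJewett β) (s : Finset β) (m : ℕ)
    {θ : ℝ} (hθ : 0 < θ) :
    ∃ N : ℕ, ∀ {ι : Type} [Finite ι], N ≤ Nat.card ι →
      ∀ {b : β} {C : Set (ι → Option β)} {D : β → Set (ι → Option β)}, Insensitive b C →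
        (∀ a, Insensitive a (D a)) → Tiled m θ (C ∩ {x | ∀ a ∈ s, x ∈ D a}) := by
  classical
  induction s using Finset.induction_on generalizing m θ with
  | empty =>
    obtain ⟨N, hN⟩ := h.exists_tiled m hθ
    exact ⟨N, fun hι _ _ _ hC _ => by simpa using hN hι hC⟩
  | insert a s _ ih =>
    obtain ⟨n, hn⟩ := h.exists_tiled m (half_pos hθ)
    obtain ⟨N, hN⟩ := ih n (half_pos hθ)
    refine ⟨N, fun {ι} _ hι b C D hC hD => ?_⟩
    have hset : C ∩ {x | ∀ c ∈ insert a s, x ∈ D c} = C ∩ {x | ∀ c ∈ s, x ∈ D c} ∩ D a := by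
      ext x
      simp only [Set.mem_inter_iff, Set.mem_ofPred_eq, Finset.forall_mem_insert]
      tauto
    rw [hset, ← add_halves θ]
    exact (hN hι hC hD).inter (half_pos hθ).le fun V => hn (by simp) ((hD a).preimage V)

theorem DensityHalesJewett.exists_tiled_compl (h : DensityHalesJewett β) (s : Finset β) (m : ℕ)
    {θ : ℝ} (hθ : 0 < θ) :
    ∃ N : ℕ, ∀ {ι : Type} [Finite ι], N ≤ Nat.card ι → ∀ {D : β → Set (ι → Option β)},
      (∀ a, Insensitive a (D a)) → Tiled m θ {x | ∀ a ∈ s, x ∈ D a}ᶜ := by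
  classical
  induction s using Finset.induction_on generalizing θ with
  | empty =>
    refine ⟨0, fun _ D _ => ?_⟩
    simpa using tiled_empty hθ.le
  | insert a s _ ih =>
    obtain ⟨N, hN⟩ := ih (half_pos hθ)
    obtain ⟨N', hN'⟩ := h.exists_tiled_inter s m (half_pos hθ)
    refine ⟨max N N', fun {ι} _ hι D hD => ?_⟩
    have hset : {x | ∀ c ∈ insert a s, x ∈ D c}ᶜ =
        {x | ∀ c ∈ s, x ∈ D c}ᶜ ∪ (D a)ᶜ ∩ {x | ∀ c ∈ s, x ∈ D c} := by
      ext x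
      simp only [Set.mem_compl_iff, Set.mem_union, Set.mem_inter_iff, Set.mem_ofPred_eq,
        Finset.forall_mem_insert]
      tauto
    rw [hset, ← add_halves θ]
    exact (hN (le_of_max_le_left hι) hD).union_of_disjoint
      (hN' (le_of_max_le_right hι) (hD a).compl hD)
      (disjoint_compl_left.mono_right Set.inter_subset_right)

end TilingInsensitive

section LineFree

variable {α : Type u}

/-- The infimum, over all lengths, of the maximal density of a set of words without a combinatorial
line. -/
noncomputable def lineFreeDensity (α : Type u) : ℝ :=
  sInf {c | ∃ n : ℕ, ∀ A : Set (Fin n → α), ¬ HasSubspace Unit A → density A ≤ c}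

variable [Nonempty α]

theorem lineFreeDensity_le {c : ℝ} {n : ℕ}
    (h : ∀ A : Set (Fin n → α), ¬ HasSubspace Unit A → density A ≤ c) : lineFreeDensity α ≤ c := by
  refine csInf_le ⟨0, ?_⟩ ⟨n, h⟩
  rintro c' ⟨n', hn'⟩
  exact density_empty.symm.trans_le (hn' ∅ not_hasSubspace_empty)

theorem exists_lt_density {c : ℝ} (hc : c < lineFreeDensity α) (ι : Type) [Finite ι] :
    ∃ A : Set (ι → α), ¬ HasSubspace Unit A ∧ c < density A := by
  by_contra! hle
  have e := Finite.equivFin ι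
  refine hc.not_ge (lineFreeDensity_le (n := Nat.card ι) fun A hA => ?_)
  rw [← density_preimage_equiv (e.arrowCongr (Equiv.refl α))]
  refine hle _ fun ⟨V, hV⟩ => hA ⟨V.reindex (Equiv.refl Unit) (Equiv.refl α) e, fun y => ?_⟩
  convert Set.mem_preimage.1 (hV y)
  ext i
  simp

variable [Finite α]

theorem exists_forall_density_le {c : ℝ} (hc : lineFreeDensity α < c) :
    ∃ n : ℕ, ∀ A : Set (Fin n → α), ¬ HasSubspace Unit A → density A ≤ c := by
  obtain ⟨c', ⟨n, hn⟩, hc'⟩ :=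
    exists_lt_of_csInf_lt ⟨1, by exact ⟨0, fun A _ => density_le_one A⟩⟩ hc
  exact ⟨n, fun A hA => (hn A hA).trans hc'.le⟩

theorem lineFreeDensity_le_one : lineFreeDensity α ≤ 1 :=
  lineFreeDensity_le (n := 0) fun A _ => density_le_one A

theorem densityHalesJewett_of_lineFreeDensity_nonpos (h : lineFreeDensity α ≤ 0) :
    DensityHalesJewett α := by
  intro ε hε
  obtain ⟨n, hn⟩ := exists_forall_density_le (h.trans_lt (half_pos hε))
  refine ⟨n, fun A hA => ?_⟩
  by_contra hline
  linarith [hn A hline]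

-- All fibres have density at most slightly more than `lineFreeDensity α`, while their average is
-- almost `lineFreeDensity α`; so none of them is much sparser.
theorem exists_forall_le_density_glue (κ : Type) [Finite κ] {γ : ℝ} (hγ : 0 < γ) :
    ∃ (n : ℕ) (A : Set (κ ⊕ Fin n → α)), ¬ HasSubspace Unit A ∧
      ∀ x, lineFreeDensity α - γ ≤ density {z | glue (Equiv.refl _) x z ∈ A} := by
  set K := (Nat.card (κ → α) : ℝ)
  have hK : 0 < K := Nat.cast_pos.2 Nat.card_pos
  set ε := γ / (2 * K) with hε
  have hεpos : 0 < ε := by positivity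
  obtain ⟨n, hn⟩ := exists_forall_density_le (α := α) (lt_add_of_pos_right _ hεpos)
  obtain ⟨A, hA, hdens⟩ := exists_lt_density (α := α) (sub_lt_self _ hεpos) (κ ⊕ Fin n)
  refine ⟨n, A, hA, fun x => ?_⟩
  have hfiber (x : κ → α) :
      density {z | glue (Equiv.refl _) x z ∈ A} ≤ lineFreeDensity α + ε :=
    hn _ fun h => hA (HasSubspace.of_preimage (fixLeft (Equiv.refl _) x)
      (by simpa [Set.preimage] using h))
  have hx := sub_card_mul_le hfiber x
  rw [← density_eq_avg_glue] at hx
  have hKε : K * (2 * ε) = γ := by rw [hε]; field_simp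
  have hlt : K * (lineFreeDensity α + ε - density A) ≤ K * (2 * ε) := by gcongr; linarith
  linarith

theorem density_le_of_tiled {ι : Type} [Finite ι] {n : ℕ} {c γ : ℝ} (hc : 0 ≤ c)
    (hn : ∀ A : Set (Fin n → α), ¬ HasSubspace Unit A → density A ≤ c)
    {B I : Set (ι → α)} (hB : ¬ HasSubspace Unit B) (hI : Tiled n γ Iᶜ) :
    density B ≤ density (B ∩ I) + (c * (1 - density I) + γ) := by
  have hf : NonposOnSubspaces n fun w => B.indicator 1 w - c := by
    refine ⟨fun w => ?_, fun V => ?_⟩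
    · have hle : B.indicator 1 w ≤ (1 : ℝ) :=
        Set.indicator_apply_le' (fun _ => le_rfl) fun _ => zero_le_one
      linarith
    · rw [avg_sub, avg_const, sub_nonpos]
      exact hn (V ⁻¹' B) fun h => hB (h.of_preimage V)
  have hsplit : (Iᶜ.indicator fun w => B.indicator 1 w - c) =
      fun w => (B \ I).indicator 1 w - c * Iᶜ.indicator 1 w := by
    ext w
    by_cases hw : w ∈ I <;> by_cases hwB : w ∈ B <;> simp [hw, hwB]
  have hle := hI _ hf
  rw [hsplit, avg_sub, avg_const_mul, ← density, ← density, density_compl] at hle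
  have hB_eq := density_union_of_disjoint (Set.disjoint_sdiff_inter (s := B) (t := I))
  rw [Set.sdiff_union_inter] at hB_eq
  linarith

end LineFree

section Option

variable {β : Type u} {ι κ μ ν : Type}

/-- Replace the letters `none` in the block `k` of a word made of blocks by the letter `u k`. -/
def blockFill (u : κ → β) (x : κ × μ → Option β) : κ × μ → Option β :=
  fun q => fill (u q.1) (x q)

/-- The splitting of the coordinates of a word made of blocks into those in the blocks where the
line `L` varies and those in the other blocks. -/
noncomputable def activeSplit (L : Subspace Unit β κ) (μ : Type) :
    κ × μ ≃ {q : κ × μ // L.idxFun q.1 = Sum.inr ()} ⊕ {q : κ × μ // L.idxFun q.1 ≠ Sum.inr ()} :=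
  open Classical in (Equiv.sumCompl fun q : κ × μ => L.idxFun q.1 = Sum.inr ()).symm

theorem blockFill_glue_activeSplit (L : Subspace Unit β κ)
    (w : {q : κ × μ // L.idxFun q.1 = Sum.inr ()} → Option β)
    (v : {q : κ × μ // L.idxFun q.1 ≠ Sum.inr ()} → Option β) (y y' : Unit → β) :
    blockFill (L y) (glue (activeSplit L μ) w v) =
      glue (activeSplit L μ) (fill (y ()) ∘ w) fun q => fill (L y' q.1.1) (v q) := by
  ext1 q
  obtain ⟨q | q, rfl⟩ := (activeSplit L μ).symm.surjective q
  · simp [blockFill, glue, activeSplit, Subspace.apply_def, q.2]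
  · rcases hq : L.idxFun q.1.1 with b | j
    · simp [blockFill, glue, activeSplit, Subspace.apply_def, hq]
    · exact absurd hq q.2

theorem card_le_card_active [Finite κ] [Finite μ] (L : Subspace Unit β κ) :
    Nat.card μ ≤ Nat.card {q : κ × μ // L.idxFun q.1 = Sum.inr ()} := by
  obtain ⟨i, hi⟩ := L.proper ()
  exact Nat.card_le_card_of_injective (fun t => ⟨(i, t), hi⟩) fun t t' h => by simpa using h

-- A word `w` with a letter `none` forms a combinatorial line together with the words `fill b ∘ w`.
theorem inter_fill_subset {B : Set (ι → Option β)} (hB : ¬ HasSubspace Unit B) :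
    B ∩ {w | ∀ b, fill b ∘ w ∈ B} ⊆ {w | ∀ i, w i ∈ ({none}ᶜ : Set (Option β))} := by
  rintro w ⟨hw, hfill⟩ i hi
  refine hB ⟨⟨fun j => (w j).elim (Sum.inr ()) fun b => Sum.inl (some b),
    fun _ => ⟨i, by simp [Set.mem_singleton_iff.1 hi]⟩⟩, fun y => ?_⟩
  cases hy : y () with
  | none =>
    convert hw
    ext1 j
    cases hj : w j <;> simp [Subspace.apply_def, hj, hy]
  | some b =>
    convert hfill b
    ext1 j
    cases hj : w j <;> simp [Subspace.apply_def, fill, hj, hy]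

variable [Finite β] [Nonempty β]

-- For a random word `x` and a random `u`, all fibres of `A` are dense, in particular the one over
-- `blockFill u x`; so for many `x` there are many good `u`, hence a line of good `u`.
theorem exists_line_le_density_blockFill [Finite κ] [Finite μ] [Finite ν] {c : ℝ} (hc : 0 < c)
    (hline : ∀ U : Set (κ → β), c ≤ density U → HasSubspace Unit U)
    {A : Set ((κ × μ) ⊕ ν → Option β)}
    (hA : ∀ x, 2 * c ≤ density {z | glue (Equiv.refl _) x z ∈ A}) :
    ∃ L : Subspace Unit β κ, c / (Nat.card (Subspace Unit β κ) + 1) ≤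
      density {p : (ν → Option β) × (κ × μ → Option β) |
        ∀ y, glue (Equiv.refl _) (blockFill (L y) p.2) p.1 ∈ A} := by
  refine exists_subspace_le_density (Z := (ν → Option β) × (κ × μ → Option β))
    (S := fun p => {u | glue (Equiv.refl _) (blockFill u p.2) p.1 ∈ A}) hc ?_ fun _ => hline _
  rw [avg_prod, avg_comm]
  refine le_avg fun x => ?_
  simp only [density]
  rw [avg_comm]
  exact le_avg fun u => hA (blockFill u x)

theorem exists_subspace_le_avg_density_fill [Finite κ] [Finite μ] [Finite ν] {c : ℝ} (hc : 0 < c)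
    (hline : ∀ U : Set (κ → β), c ≤ density U → HasSubspace Unit U)
    {A : Set ((κ × μ) ⊕ ν → Option β)}
    (hA : ∀ x, 2 * c ≤ density {z | glue (Equiv.refl _) x z ∈ A}) :
    ∃ (η : Type) (_ : Finite η) (G : Subspace η (Option β) (κ × μ)), Nat.card μ ≤ Nat.card η ∧
      c / (Nat.card (Subspace Unit β κ) + 1) ≤
        avg fun z => density {w | ∀ b, glue (Equiv.refl _) (G (fill b ∘ w)) z ∈ A} := by
  obtain ⟨L, hL⟩ := exists_line_le_density_blockFill hc hline hA
  set T := {p : (ν → Option β) × (κ × μ → Option β) |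
    ∀ y, glue (Equiv.refl _) (blockFill (L y) p.2) p.1 ∈ A}
  set e := activeSplit L μ
  have hT : density T = avg fun v => avg fun z => density {w | (z, glue e w v) ∈ T} :=
    calc density T = avg fun z => density {x | (z, x) ∈ T} := avg_prod _
      _ = avg fun z => avg fun v => density {w | (z, glue e w v) ∈ T} :=
        congrArg avg (funext fun z => density_eq_avg_glue' e _)
      _ = _ := avg_comm _
  obtain ⟨v, hv⟩ := exists_avg_le fun v => avg fun z => density {w | (z, glue e w v) ∈ T}
  refine ⟨_, inferInstance,
    fixRight e fun q => fill (L (fun _ => Classical.arbitrary β) q.1.1) (v q),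
    card_le_card_active L, (hL.trans_eq hT).trans (hv.trans ?_)⟩
  refine avg_mono fun z => density_mono fun w hw b => ?_
  rw [fixRight_apply, ← blockFill_glue_activeSplit L w v fun _ => b]
  exact hw fun _ => b

theorem DensityHalesJewett.exists_density_le (h : DensityHalesJewett β) {c γ : ℝ} (hc : 0 ≤ c)
    (hlt : lineFreeDensity (Option β) < c) (hγ : 0 < γ) :
    ∃ m : ℕ, ∀ {κ : Type} [Finite κ], m ≤ Nat.card κ → ∀ B : Set (κ → Option β),
      ¬ HasSubspace Unit B →
        density B ≤ c * (1 - density {w | ∀ b, fill b ∘ w ∈ B}) + 2 * γ := by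
  cases nonempty_fintype β
  obtain ⟨n, hn⟩ := exists_forall_density_le hlt
  obtain ⟨N, hN⟩ := h.exists_tiled_compl Finset.univ n hγ
  obtain ⟨t, ht⟩ := exists_pow_lt_of_lt_one hγ (density_compl_none_lt_one (β := β))
  refine ⟨max N t, fun {κ} _ hκ B hB => ?_⟩
  cases nonempty_fintype κ
  have htile : Tiled n γ {w | ∀ b, fill b ∘ w ∈ B}ᶜ := by
    simpa using hN (le_of_max_le_left hκ) fun b => insensitive_setOf_fill (b := b) B
  have hinter : density (B ∩ {w | ∀ b, fill b ∘ w ∈ B}) ≤ γ :=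
    calc _ ≤ _ := density_mono (inter_fill_subset hB)
      _ = density ({none}ᶜ : Set (Option β)) ^ Nat.card κ := by
        rw [density_pi, Finset.prod_const, Finset.card_univ, Nat.card_eq_fintype_card]
      _ ≤ density ({none}ᶜ : Set (Option β)) ^ t :=
        pow_le_pow_of_le_one (density_nonneg _) density_compl_none_lt_one.le
          (le_of_max_le_right hκ)
      _ ≤ γ := ht.le
  linarith [density_le_of_tiled hc hn hB htile]

-- On the subspace `G` the set `A` still has density almost `δ` on average, but it nearly avoids a
-- set of average density at least `r` and has density at most about `δ` on the rest.
theorem DensityHalesJewett.option (h : DensityHalesJewett β) : DensityHalesJewett (Option β) := by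
  set δ := lineFreeDensity (Option β)
  refine densityHalesJewett_of_lineFreeDensity_nonpos (le_of_not_gt fun hpos => ?_)
  obtain ⟨m₀, hm₀⟩ := h (δ / 3) (by positivity)
  set r := δ / 3 / (Nat.card (Subspace Unit β (Fin m₀)) + 1)
  have hr_pos : 0 < r := by positivity
  have hr_le : r ≤ 1 := (div_le_self (by positivity) (by simp)).trans
    (by linarith [lineFreeDensity_le_one (α := Option β)])
  set γ := δ * r / 8 with hγ
  have hγ_pos : 0 < γ := div_pos (mul_pos hpos hr_pos) (by norm_num)
  have hγ_le : γ ≤ δ / 8 := by rw [hγ]; gcongr; exact mul_le_of_le_one_right hpos.le hr_le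
  obtain ⟨m, hm⟩ := h.exists_density_le (c := δ + γ) (by positivity) (by linarith) hγ_pos
  obtain ⟨n, A, hA, hfiber⟩ := exists_forall_le_density_glue (α := Option β) (Fin m₀ × Fin m) hγ_pos
  obtain ⟨η, _, G, hη, hG⟩ := exists_subspace_le_avg_density_fill (by positivity) hm₀
    fun x => (by linarith : 2 * (δ / 3) ≤ δ - γ).trans (hfiber x)
  have hlower : δ - γ ≤ avg fun z => density {w | glue (Equiv.refl _) (G w) z ∈ A} := by
    simp only [density]
    rw [avg_comm]
    exact le_avg fun w => hfiber (G w)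
  have hupper (z : Fin n → Option β) :
      density {w | glue (Equiv.refl _) (G w) z ∈ A} ≤ (δ + γ) *
        (1 - density {w | ∀ b, glue (Equiv.refl _) (G (fill b ∘ w)) z ∈ A}) + 2 * γ :=
    hm (by simpa using hη) _ fun hline => hA <|
      .of_preimage (fixRight (Equiv.refl _) z) <| .of_preimage G <|
        by simpa [Set.preimage] using hline
  have hle := hlower.trans (avg_mono hupper)
  rw [avg_add, avg_const_mul, avg_sub, avg_const, avg_const] at hle
  have hgain := mul_le_mul_of_nonneg_left hG (by positivity : 0 ≤ δ + γ)
  have hγr : 0 < γ * r := mul_pos hγ_pos hr_pos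
  linarith

theorem densityHalesJewett_of_subsingleton (α : Type u) [Subsingleton α] :
    DensityHalesJewett α := by
  intro ε hε
  refine ⟨1, fun A hA => ?_⟩
  obtain ⟨x, hx⟩ := nonempty_of_density_pos (hε.trans_le hA)
  refine ⟨⟨fun _ => Sum.inr (), fun _ => ⟨0, rfl⟩⟩, fun y => ?_⟩
  convert hx

theorem densityHalesJewett (α : Type u) [Finite α] : DensityHalesJewett α := by
  induction α using Finite.induction_empty_option with
  | of_equiv e h => exact h.congr e
  | h_empty => exact densityHalesJewett_of_subsingleton PEmpty
  | h_option h =>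
    rename_i β _
    cases isEmpty_or_nonempty β
    · exact densityHalesJewett_of_subsingleton (Option β)
    · exact h.option

end Option

end HalesJewett

section Submeasure

variable {X T : Type*} {μ : T → Set X → ℝ≥0∞}

theorem IsFAMeasure.mono {ν : Set X → ℝ≥0∞} (hν : IsFAMeasure ν) {A B : Set X} (h : A ⊆ B) :
    ν A ≤ ν B := by
  rw [← Set.union_sdiff_cancel h, hν.2 _ _ Set.disjoint_sdiff_right]
  exact le_self_add

theorem IsFAMeasure.union_le {ν : Set X → ℝ≥0∞} (hν : IsFAMeasure ν) (A B : Set X) :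
    ν (A ∪ B) ≤ ν A + ν B := by
  rw [← Set.union_sdiff_self, hν.2 _ _ Set.disjoint_sdiff_right]
  gcongr
  exact hν.mono Set.sdiff_subset

theorem isSubmeasure_iSup (hμ : ∀ t, IsFAMeasure (μ t)) : IsSubmeasure fun A => ⨆ t, μ t A :=
  ⟨by simp [(hμ _).1], fun _ _ h => iSup_mono fun t => (hμ t).mono h, fun A B =>
    iSup_le fun t => ((hμ t).union_le A B).trans
      (add_le_add (le_iSup (fun t => μ t A) t) (le_iSup (fun t => μ t B) t))⟩

theorem isLSC_iSup (hμ : ∀ t, IsFAMeasure (μ t))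
    (hfin : ∀ t A, ∃ F ⊆ A, F.Finite ∧ μ t F = μ t A) : IsLSC fun A => ⨆ t, μ t A := by
  refine fun A => le_antisymm (iSup_le fun t => ?_)
    (iSup₂_le fun F hF => iSup_mono fun t => (hμ t).mono hF.1)
  obtain ⟨F, hFA, hF, hμF⟩ := hfin t A
  exact hμF.symm.trans_le ((le_iSup (fun t => μ t F) t).trans
    (le_iSup₂ (f := fun F (_ : F ⊆ A ∧ F.Finite) => ⨆ t, μ t F) F ⟨hFA, hF⟩))

theorem hat_iSup (hμ : ∀ t, IsFAMeasure (μ t)) (A : Set X) :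
    hat (fun A => ⨆ t, μ t A) A = ⨆ t, μ t A :=
  le_antisymm (iSup₂_le fun _ h => h.2 A) <| iSup_le fun t =>
    le_iSup₂ (f := fun (ν : Set X → ℝ≥0∞) (_ : IsFAMeasure ν ∧ ∀ B, ν B ≤ ⨆ t, μ t B) => ν A)
      (μ t) ⟨hμ t, fun B => le_iSup (fun t => μ t B) t⟩

theorem pratio_self (a : ℝ≥0∞) : pratio a a = 1 := by
  unfold pratio
  split_ifs with h
  · rfl
  · exact ENNReal.div_self (fun h0 => h (.inl ⟨h0, h0⟩)) fun htop => h (.inr ⟨htop, htop⟩)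

theorem degPFin_le_one {φ : Set X → ℝ≥0∞} (h : ∀ A, hat φ A = φ A) : degPFin φ ≤ 1 :=
  iSup₂_le fun A _ => (by rw [h, pratio_self] : pratio (φ A) (hat φ A) = 1).le

end Submeasure

theorem ContainsAP.of_le {B : Set ℕ} {j k : ℕ} (h : ContainsAP B k) (hjk : j ≤ k) :
    ContainsAP B j := by
  obtain ⟨a, d, hd, hmem⟩ := h
  exact ⟨a, d, hd, fun i hi => hmem i (hi.trans_le hjk)⟩

namespace VanDerWaerden

open HalesJewett

section Pushforward

variable {X Y : Type*}

/-- The multiple by `c` of the image under `p` of the uniform probability measure on `X`. -/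
noncomputable def pushforward (c : ℝ≥0∞) (p : X → Y) (B : Set Y) : ℝ≥0∞ :=
  c * ENNReal.ofReal (density (p ⁻¹' B))

variable [Finite X]

theorem isFAMeasure_pushforward (c : ℝ≥0∞) (p : X → Y) : IsFAMeasure (pushforward c p) := by
  refine ⟨by simp [pushforward, density_empty], fun A B h => ?_⟩
  rw [pushforward, Set.preimage_union, density_union_of_disjoint (h.preimage p),
    ENNReal.ofReal_add (density_nonneg _) (density_nonneg _), mul_add, pushforward, pushforward]

theorem exists_finite_pushforward_eq (c : ℝ≥0∞) (p : X → Y) (B : Set Y) :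
    ∃ F ⊆ B, F.Finite ∧ pushforward c p F = pushforward c p B :=
  ⟨B ∩ Set.range p, Set.inter_subset_left, (Set.finite_range p).inter_of_right B, by
    rw [pushforward, Set.preimage_inter_range, pushforward]⟩

end Pushforward

/-- The map from words to the arithmetic progression with first term `a` and difference `d` given by
the sum of the letters. It takes combinatorial lines to arithmetic progressions. -/
def apPoint {ι : Type*} [Fintype ι] {k : ℕ} (a d : ℕ) (x : ι → Fin k) : ℕ :=
  a + (∑ i, (x i : ℕ)) * d

theorem apPoint_line {ι : Type} [Fintype ι] {k : ℕ} (a d : ℕ) (V : Subspace Unit (Fin (k + 1)) ι)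
    (t : Fin (k + 1)) : apPoint a d (V fun _ => t) = apPoint a d (V fun _ => 0) +
      t * (Nat.card {i // V.idxFun i = Sum.inr ()} * d) := by
  classical
  have hletter (i : ι) : (V (fun _ => t) i : ℕ) =
      (V (fun _ => 0) i : ℕ) + if V.idxFun i = Sum.inr () then (t : ℕ) else 0 := by
    cases h : V.idxFun i <;> simp [Subspace.apply_def, h]
  simp only [apPoint, hletter, Finset.sum_add_distrib, ← Finset.sum_filter, Finset.sum_const,
    smul_eq_mul, Nat.card_eq_fintype_card, Fintype.card_subtype]
  ring

theorem containsAP_of_hasSubspace {ι : Type} [Fintype ι] {k a d : ℕ} (hd : 0 < d) {B : Set ℕ}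
    (h : HasSubspace Unit ((apPoint a d : (ι → Fin (k + 1)) → ℕ) ⁻¹' B)) :
    ContainsAP B (k + 1) := by
  obtain ⟨V, hV⟩ := h
  obtain ⟨i, hi⟩ := V.proper ()
  have hactive : Nonempty {i // V.idxFun i = Sum.inr ()} := ⟨⟨i, hi⟩⟩
  refine ⟨apPoint a d (V fun _ => 0), Nat.card {i // V.idxFun i = Sum.inr ()} * d,
    Nat.mul_pos Nat.card_pos hd, fun t ht => ?_⟩
  exact apPoint_line a d V ⟨t, ht⟩ ▸ hV fun _ => ⟨t, ht⟩

theorem apPoint_mem {ι : Type*} [Fintype ι] {k a d : ℕ} {B : Set ℕ}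
    (h : ∀ i < Fintype.card ι * k + 1, a + i * d ∈ B) (x : ι → Fin (k + 1)) :
    apPoint a d x ∈ B := by
  refine h _ (Nat.lt_succ_of_le ?_)
  calc ∑ i, (x i : ℕ) ≤ ∑ _i : ι, k := Finset.sum_le_sum fun i _ => (x i).is_le
    _ = Fintype.card ι * k := by simp

/-- A length `n` such that every set of words of length `n` over `k + 1` letters that has density at
least `1 / (k + 1)` contains a combinatorial line. -/
noncomputable def lineLength (k : ℕ) : ℕ :=
  (densityHalesJewett (Fin (k + 1)) (1 / (k + 1)) (by positivity)).choose

theorem hasSubspace_of_le_density {k : ℕ} {A : Set (Fin (lineLength k) → Fin (k + 1))}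
    (h : 1 / (k + 1) ≤ density A) : HasSubspace Unit A :=
  (densityHalesJewett (Fin (k + 1)) (1 / (k + 1)) (by positivity)).choose_spec A h

/-- A measure of total mass `k + 1` on an initial segment of the arithmetic progression with first
term `a` and difference `d`, giving mass at most `1` to sets without progressions of length
`k + 1`. -/
noncomputable def apMeasure (k a : ℕ) (d : ℕ+) : Set ℕ → ℝ≥0∞ :=
  pushforward (k + 1) (apPoint a d : (Fin (lineLength k) → Fin (k + 1)) → ℕ)

theorem apMeasure_le (k a : ℕ) (d : ℕ+) (B : Set ℕ) : apMeasure k a d B ≤ k + 1 :=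
  mul_le_of_le_one_right' (ENNReal.ofReal_le_one.2 (density_le_one _))

theorem apMeasure_le_one {k : ℕ} {B : Set ℕ} (hB : ¬ ContainsAP B (k + 1)) (a : ℕ) (d : ℕ+) :
    apMeasure k a d B ≤ 1 := by
  have hlt : density ((apPoint a d : (Fin (lineLength k) → Fin (k + 1)) → ℕ) ⁻¹' B) < 1 / (k + 1) :=
    lt_of_not_ge fun h => hB (containsAP_of_hasSubspace d.pos (hasSubspace_of_le_density h))
  rw [lt_div_iff₀' (by positivity)] at hlt
  calc apMeasure k a d B = ENNReal.ofReal ((k + 1) * density _) := by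
        rw [apMeasure, pushforward, ENNReal.ofReal_mul (by positivity)]
        norm_cast
    _ ≤ 1 := ENNReal.ofReal_le_one.2 hlt.le

theorem exists_apMeasure_eq {B : Set ℕ} (hB : B ∉ vdW) (k : ℕ) :
    ∃ a d, apMeasure k a d B = k + 1 := by
  obtain ⟨a, d, hd, hmem⟩ : ContainsAP B (lineLength k * k + 1) := by
    by_contra h
    exact hB ⟨_, h⟩
  refine ⟨a, ⟨d, hd⟩, ?_⟩
  have huniv : (apPoint a d : (Fin (lineLength k) → Fin (k + 1)) → ℕ) ⁻¹' B = Set.univ :=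
    Set.eq_univ_of_forall fun x => apPoint_mem (B := B) (by simpa using hmem) x
  simp [apMeasure, pushforward, huniv, density_univ]

/-- The supremum of the measures `apMeasure k a d`. -/
noncomputable def apSubmeasure (B : Set ℕ) : ℝ≥0∞ :=
  ⨆ p : ℕ × ℕ × ℕ+, apMeasure p.1 p.2.1 p.2.2 B

theorem isSubmeasure_apSubmeasure : IsSubmeasure apSubmeasure :=
  isSubmeasure_iSup fun _ => isFAMeasure_pushforward _ _

theorem isLSC_apSubmeasure : IsLSC apSubmeasure :=
  isLSC_iSup (fun _ => isFAMeasure_pushforward _ _) fun _ => exists_finite_pushforward_eq _ _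

theorem hat_apSubmeasure (B : Set ℕ) : hat apSubmeasure B = apSubmeasure B :=
  hat_iSup (fun _ => isFAMeasure_pushforward _ _) B

theorem apSubmeasure_le {j : ℕ} {B : Set ℕ} (hB : ¬ ContainsAP B j) : apSubmeasure B ≤ j + 1 := by
  refine iSup_le fun ⟨k, a, d⟩ => ?_
  rcases le_or_gt j (k + 1) with hjk | hjk
  · exact (apMeasure_le_one (fun h => hB (h.of_le hjk)) a d).trans le_add_self
  · refine (apMeasure_le k a d B).trans ?_
    gcongr
    exact_mod_cast Nat.le_of_succ_le hjk.le

theorem apSubmeasure_eq_top {B : Set ℕ} (hB : B ∉ vdW) : apSubmeasure B = ⊤ := by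
  refine ENNReal.eq_top_of_forall_nnreal_le fun r => ?_
  obtain ⟨k, hk⟩ := exists_nat_ge r
  obtain ⟨a, d, hmass⟩ := exists_apMeasure_eq hB k
  calc (r : ℝ≥0∞) ≤ k := mod_cast hk
    _ ≤ apMeasure k a d B := hmass ▸ le_self_add
    _ ≤ apSubmeasure B := le_iSup (fun p : ℕ × ℕ × ℕ+ => apMeasure p.1 p.2.1 p.2.2 B) (k, a, d)

theorem setOf_apSubmeasure_lt_top : {B | apSubmeasure B < ⊤} = vdW := by
  ext B
  refine ⟨fun h => ?_, fun ⟨j, hj⟩ => (apSubmeasure_le hj).trans_lt (by finiteness)⟩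
  by_contra hB
  exact (Set.mem_ofPred.1 h).ne (apSubmeasure_eq_top hB)

end VanDerWaerden

/-- There is an lsc submeasure `φ` with `Fin φ = 𝒲` and `P_Fin φ ≤ 2`; consequently there is
a nonpathological lsc submeasure `ψ` with `Fin ψ = 𝒲`, i.e., the van der Waerden ideal is a
nonpathological `F_σ` ideal. -/
theorem stmt18 :
    (∃ φ : Set ℕ → ℝ≥0∞, IsSubmeasure φ ∧ IsLSC φ ∧
      {A : Set ℕ | φ A < ⊤} = vdW ∧ degPFin φ ≤ 2) ∧
    ∃ ψ : Set ℕ → ℝ≥0∞, IsSubmeasure ψ ∧ IsLSC ψ ∧ (∀ A, hat ψ A = ψ A) ∧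
      {A : Set ℕ | ψ A < ⊤} = vdW := by
  have hdeg : degPFin VanDerWaerden.apSubmeasure ≤ 2 :=
    (degPFin_le_one VanDerWaerden.hat_apSubmeasure).trans one_le_two
  exact ⟨⟨_, VanDerWaerden.isSubmeasure_apSubmeasure, VanDerWaerden.isLSC_apSubmeasure,
      VanDerWaerden.setOf_apSubmeasure_lt_top, hdeg⟩,
    _, VanDerWaerden.isSubmeasure_apSubmeasure, VanDerWaerden.isLSC_apSubmeasure,
      VanDerWaerden.hat_apSubmeasure, VanDerWaerden.setOf_apSubmeasure_lt_top⟩
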